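/- Let r₀, d ∈ ℝ³ and let R ≥ 0, D ≥ 0 with D ≤ 2R. If ‖r₀‖₂ ≥ R, ‖r₀ + d‖₂ ≥ R, and ‖d‖₂ ≤ D, then for every t ∈ [0,1] one has ‖r₀ + t d‖₂ ≥ √(R² − D²/4). -/

import Mathlib

/-!
By Stewart's identity,
`‖r₀ + t d‖² = (1 - t) ‖r₀‖² + t ‖r₀ + d‖² - t (1 - t) ‖d‖²`.
The first two terms are at least `R²` together, and the last one subtracts at most `D² / 4`,
since `t (1 - t) ≤ 1 / 4`.
-/

/-- **Lower bound on the interpolated relative distance over a sampling interval.**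
If `‖r₀‖ ≥ R`, `‖r₀ + d‖ ≥ R` and `‖d‖ ≤ D` with `0 ≤ D ≤ 2R`, then for all `t ∈ [0,1]`,
`‖r₀ + t d‖ ≥ √(R² − D²/4)`. -/
theorem interpolated_distance_lower_bound
    (r₀ d : EuclideanSpace ℝ (Fin 3)) (R D : ℝ) (hR : 0 ≤ R) (hD : 0 ≤ D)
    (hD2R : D ≤ 2 * R) (h1 : R ≤ ‖r₀‖) (h2 : R ≤ ‖r₀ + d‖) (h3 : ‖d‖ ≤ D) :
    ∀ t ∈ Set.Icc (0:ℝ) 1, Real.sqrt (R ^ 2 - D ^ 2 / 4) ≤ ‖r₀ + t • d‖ := by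
  rintro t ⟨ht0, ht1⟩
  apply Real.sqrt_le_iff.mpr ⟨norm_nonneg _, ?_⟩
  have key : ‖r₀ + t • d‖ ^ 2
      = (1 - t) * ‖r₀‖ ^ 2 + t * ‖r₀ + d‖ ^ 2 - t * (1 - t) * ‖d‖ ^ 2 := by
    rw [norm_add_sq_real, norm_add_sq_real, inner_smul_right, norm_smul, mul_pow,
      Real.norm_eq_abs, sq_abs]
    ring
  have hs : 0 ≤ 1 - t := sub_nonneg.mpr ht1
  have e1 : (1 - t) * R ^ 2 ≤ (1 - t) * ‖r₀‖ ^ 2 := by gcongr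
  have e2 : t * R ^ 2 ≤ t * ‖r₀ + d‖ ^ 2 := by gcongr
  have e3 : t * (1 - t) * ‖d‖ ^ 2 ≤ t * (1 - t) * D ^ 2 := by gcongr
  have e4 : t * (1 - t) * D ^ 2 ≤ 1 / 4 * D ^ 2 := by
    gcongr
    nlinarith [sq_nonneg (2 * t - 1)]
  linarith
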